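/- Let λ be a Dyck path of order n, σ ∈ L(P_λ), and T = DTR(λ,σ); let ℓ_i, r_i be the endpoint positions of the chord labeled i in the natural labeling corresponding to σ, and let τ be the standardization of the word r = r_1⋯r_n (σ is the standardization of ℓ = ℓ_1⋯ℓ_n). Then area(T) = desdif(σ,τ) − des(σ) − Σ_{i∈DES(σ)} |REM_i(σ) Δ REM_i(τ)| and tiles(T) = desdif(σ,τ) − des(σ) − Σ_{i∈DES(σ)} (|REM_i(σ)| + |REM_i(τ)|). -/

import Mathlib

open Finset

noncomputable section

/-- A Dyck path of order `n`: a word of `2n` steps (`true` = up-step `(+1,+1)`,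
`false` = down-step `(+1,-1)`) from `(-n,0)` to `(n,0)` staying weakly above the x-axis. -/
structure DyckPath (n : ℕ) where
  step : Fin (2 * n) → Bool
  balanced : (Finset.univ.filter fun i => step i = true).card = n
  nonneg : ∀ k : ℕ, k ≤ 2 * n →
    (Finset.univ.filter fun i : Fin (2 * n) => (i : ℕ) < k ∧ step i = false).card ≤
      (Finset.univ.filter fun i : Fin (2 * n) => (i : ℕ) < k ∧ step i = true).card

namespace DyckPath

/-- Height of the path above column `x` (columns run from `-n` to `n`). -/
def ht {n : ℕ} (P : DyckPath n) (x : ℤ) : ℤ :=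
  ((Finset.univ.filter fun i : Fin (2 * n) => ((i : ℕ) : ℤ) < x + n ∧ P.step i = true).card : ℤ) -
    ((Finset.univ.filter fun i : Fin (2 * n) => ((i : ℕ) : ℤ) < x + n ∧ P.step i = false).card : ℤ)

/-- Height of the path at lattice point number `k`, `0 ≤ k ≤ 2n`
(point `k` lies at column `k - n`). -/
def pt {n : ℕ} (P : DyckPath n) (k : ℕ) : ℤ := P.ht ((k : ℤ) - n)

end DyckPath

/-- `IsChord P p q`: the up-step at (0-indexed) position `p` matches the down-step at
position `q`, forming a chord of `P`. -/
def IsChord {n : ℕ} (P : DyckPath n) (p q : ℕ) : Prop :=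
  p < q ∧ q < 2 * n ∧
    (∃ hp : p < 2 * n, P.step ⟨p, hp⟩ = true) ∧
    (∃ hq : q < 2 * n, P.step ⟨q, hq⟩ = false) ∧
    P.pt (q + 1) = P.pt p ∧
    ∀ m : ℕ, p < m → m ≤ q → P.pt p < P.pt m

/-- A natural labeling of the chord poset of `P`: the chord labeled `i` has its up-step at
(0-indexed) position `l i` and matching down-step at position `r i`; distinct labels name
distinct chords; and if one chord is nested inside another it receives a larger label. -/
structure ChordLabeling {n : ℕ} (P : DyckPath n) where
  l : Fin n → ℕ
  r : Fin n → ℕ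
  chord : ∀ i, IsChord P (l i) (r i)
  inj : Function.Injective l
  natural : ∀ i j : Fin n, l j < l i → r i < r j → j < i

/-- The length of the chord labeled `i`: the number of up steps of `P` between and
including its two endpoints. -/
def chordLen {n : ℕ} {P : DyckPath n} (C : ChordLabeling P) (i : Fin n) : ℕ :=
  (Finset.univ.filter fun m : Fin (2 * n) =>
    C.l i ≤ (m : ℕ) ∧ (m : ℕ) ≤ C.r i ∧ P.step m = true).card

/-- The growth sequence `p_1, …, p_n` associated with a natural chord labeling:
`p i = #{j<i : l j < l i} + #{j<i : r j < l i}`. -/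
def seqOf {n : ℕ} {P : DyckPath n} (C : ChordLabeling P) (i : Fin n) : ℕ :=
  (Finset.univ.filter fun j : Fin n => j < i ∧ C.l j < C.l i).card +
    (Finset.univ.filter fun j : Fin n => j < i ∧ C.r j < C.l i).card

/-- `σ` is the standardization of the word `w` (with distinct letters). -/
def IsStandardization {n : ℕ} (w : Fin n → ℕ) (σ : Equiv.Perm (Fin n)) : Prop :=
  ∀ i j : Fin n, σ i < σ j ↔ w i < w j

/-- `σ ∈ 𝓛(P_λ)`: σ is `L₀ ∘ L⁻¹` for some natural labeling `L` of the chord poset,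
equivalently the standardization of the word of left endpoints of a natural labeling. -/
def LinExt {n : ℕ} (P : DyckPath n) (σ : Equiv.Perm (Fin n)) : Prop :=
  ∃ C : ChordLabeling P, IsStandardization C.l σ

/-- Successor index in `Fin n` (used only under the guard `i+1 < n`). -/
def nextIdx {n : ℕ} (i : Fin n) : Fin n := ⟨((i : ℕ) + 1) % n, Nat.mod_lt _ i.pos⟩

/-- Descent set of a word: positions `i` with `i+1 < n` and `w i > w (i+1)`. -/
def descentFinset {n : ℕ} (w : Fin n → ℕ) : Finset (Fin n) :=
  Finset.univ.filter fun i => (i : ℕ) + 1 < n ∧ w (nextIdx i) < w i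

/-- Number of inversions of a word. -/
def wordInv {n : ℕ} (w : Fin n → ℕ) : ℕ :=
  (Finset.univ.filter fun p : Fin n × Fin n => p.1 < p.2 ∧ w p.2 < w p.1).card

/-- The word of values of a permutation. -/
def permWord {n : ℕ} (σ : Equiv.Perm (Fin n)) : Fin n → ℕ := fun i => (σ i : ℕ)

/-- inv(σ). -/
def permInv {n : ℕ} (σ : Equiv.Perm (Fin n)) : ℕ := wordInv (permWord σ)

/-- des(σ). -/
def permDes {n : ℕ} (σ : Equiv.Perm (Fin n)) : ℕ := (descentFinset (permWord σ)).card

/-- `REM_i(w) = {k > i : w i > w k > w (i+1)}`, the right embraced numbers. -/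
def remSet {n : ℕ} (w : Fin n → ℕ) (i : Fin n) : Finset (Fin n) :=
  Finset.univ.filter fun k => i < k ∧ w (nextIdx i) < w k ∧ w k < w i

/-- desdif(σ) = Σ_{i ∈ DES σ} (σ i − σ (i+1)). -/
def desdif {n : ℕ} (σ : Equiv.Perm (Fin n)) : ℕ :=
  ∑ i ∈ descentFinset (permWord σ), (permWord σ i - permWord σ (nextIdx i))

/-- res(σ) = Σ_{i ∈ DES σ} #{k < i : σ i > σ k > σ (i+1)}. -/
def resStat {n : ℕ} (σ : Equiv.Perm (Fin n)) : ℕ :=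
  ∑ i ∈ descentFinset (permWord σ),
    (Finset.univ.filter fun k : Fin n =>
      k < i ∧ permWord σ (nextIdx i) < permWord σ k ∧ permWord σ k < permWord σ i).card

/-- The Mahonian statistic mad(σ) = desdif(σ) + res(σ). -/
def mad {n : ℕ} (σ : Equiv.Perm (Fin n)) : ℕ := desdif σ + resStat σ

/-- σ avoids the pattern 231. -/
def Avoids231 {n : ℕ} (σ : Equiv.Perm (Fin n)) : Prop :=
  ¬∃ i j k : Fin n, i < j ∧ j < k ∧ σ k < σ i ∧ σ i < σ j

/-- The boxes of the skew shape `lam/mu` (with `mu` weakly above `lam`), each box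
recorded by its bottom corner (a lattice point `(x, z)` with `z ≡ x + n (mod 2)`). -/
def skewCells {n : ℕ} (lam mu : DyckPath n) : Finset (ℤ × ℤ) :=
  ((Finset.Icc (-(n : ℤ)) n) ×ˢ (Finset.Icc (0 : ℤ) n)).filter fun c =>
    lam.ht c.1 ≤ c.2 ∧ c.2 + 2 ≤ mu.ht c.1 ∧ (c.2 - c.1 - n) % 2 = 0

/-- A Dyck tile, recorded by the set of bottom corners of its boxes: these form
a Dyck-path shape, i.e. a ±1-step lattice path whose two ends are lowest. -/
def IsDyckTile (t : Finset (ℤ × ℤ)) : Prop :=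
  ∃ (a b : ℤ) (f : ℤ → ℤ), a ≤ b ∧
    (∀ x : ℤ, a ≤ x → x < b → f (x + 1) = f x + 1 ∨ f (x + 1) = f x - 1) ∧
    f b = f a ∧ (∀ x : ℤ, a ≤ x → x ≤ b → f a ≤ f x) ∧
    t = (Finset.Icc a b).image fun x => (x, f x)

/-- A Dyck tiling of order `n`: a tiling of the skew shape between two Dyck paths of
order `n` by Dyck tiles. -/
structure DyckTiling (n : ℕ) where
  lower : DyckPath n
  upper : DyckPath n
  below : ∀ x : ℤ, lower.ht x ≤ upper.ht x
  tiles : Finset (Finset (ℤ × ℤ))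
  isDyck : ∀ t ∈ tiles, IsDyckTile t
  disj : ∀ t ∈ tiles, ∀ u ∈ tiles, t ≠ u → Disjoint t u
  cover : tiles.biUnion id = skewCells lower upper

namespace DyckTiling

/-- Number of boxes of the skew shape. -/
def area {n : ℕ} (T : DyckTiling n) : ℕ := (skewCells T.lower T.upper).card

/-- Number of tiles. -/
def numTiles {n : ℕ} (T : DyckTiling n) : ℕ := T.tiles.card

/-- art(T) = (area(T) + tiles(T)) / 2. -/
def art {n : ℕ} (T : DyckTiling n) : ℕ := (T.area + T.numTiles) / 2

/-- dis(T): the number of step positions where the lower path steps down while the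
upper path steps up. -/
def dis {n : ℕ} (T : DyckTiling n) : ℕ :=
  (Finset.univ.filter fun i : Fin (2 * n) =>
    T.lower.step i = false ∧ T.upper.step i = true).card

/-- Cover-inclusiveness: whenever a tile has a box strictly above a box of another tile,
its horizontal extent is contained in that of the other tile. -/
def CoverInclusive {n : ℕ} (T : DyckTiling n) : Prop :=
  ∀ t ∈ T.tiles, ∀ u ∈ T.tiles,
    (∃ p ∈ t, ∃ q ∈ u, (p : ℤ × ℤ).1 = (q : ℤ × ℤ).1 ∧ (q : ℤ × ℤ).2 < (p : ℤ × ℤ).2) →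
    ∀ p ∈ t, ∃ y : ℤ, ((p : ℤ × ℤ).1, y) ∈ u

end DyckTiling

/-- Height function of the spread at column `s` of a Dyck path. -/
def spreadHt {n : ℕ} (P : DyckPath n) (s x : ℤ) : ℤ :=
  if x < s then P.ht (x + 1) else if x = s then P.ht s + 1 else P.ht (x - 1)

/-- Spread of a tile at column `s`: points left of `s` move left, points right of `s`
move right, and a point at column `s` is duplicated upward. -/
def spreadTile (s : ℤ) (t : Finset (ℤ × ℤ)) : Finset (ℤ × ℤ) :=
  ((t.filter fun p => p.1 ≤ s).image fun p => (p.1 - 1, p.2)) ∪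
    ((t.filter fun p => p.1 = s).image fun p => (p.1, p.2 + 1)) ∪
    ((t.filter fun p => s ≤ p.1).image fun p => (p.1 + 1, p.2))

/-- Spread of a set of tiles at column `s`. -/
def spreadTiles (s : ℤ) (ts : Finset (Finset (ℤ × ℤ))) : Finset (Finset (ℤ × ℤ)) :=
  ts.image (spreadTile s)

/-- Column `c` is eligible for a tiling with upper-boundary height function `h` and
tile set `ts`: the upper boundary has an up step ending at column `c`, and its point at
column `c` is not the top corner of a one-box tile. -/
def EligibleCol (h : ℤ → ℤ) (ts : Finset (Finset (ℤ × ℤ))) (c : ℤ) : Prop :=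
  h c = h (c - 1) + 1 ∧ ({(c, h c - 2)} : Finset (ℤ × ℤ)) ∉ ts

/-- `T'` is the result of the strip-grow map applied to `(T, s)`: spread `T` at `s` and
add a one-box tile on each up step of the (spread) upper boundary starting at a column
`≥ s` (i.e. strictly to the right of column `s`). -/
def StripGrowRel {n : ℕ} (T : DyckTiling n) (s : ℤ) (T' : DyckTiling (n + 1)) : Prop :=
  (∀ x : ℤ, T'.lower.ht x = spreadHt T.lower s x) ∧
  (∀ x : ℤ, T'.upper.ht x =
    if s ≤ x ∧ spreadHt T.upper s (x + 1) = spreadHt T.upper s x + 1 then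
      spreadHt T.upper s x + 2
    else spreadHt T.upper s x) ∧
  T'.tiles = spreadTiles s T.tiles ∪
    ((Finset.Icc s (n : ℤ)).filter fun x =>
        spreadHt T.upper s (x + 1) = spreadHt T.upper s x + 1).image
      (fun x => ({(x, spreadHt T.upper s x)} : Finset (ℤ × ℤ)))

/-- `T'` is the result of the ribbon-grow map applied to `(T, s)`: spread `T` at `s`,
and if the special column `Q` of the spread tiling is strictly right of `s`, add a
ribbon of one-box tiles at all columns strictly between `s` and `Q`. -/
def RibbonGrowRel {n : ℕ} (T : DyckTiling n) (s : ℤ) (T' : DyckTiling (n + 1)) : Prop :=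
  (∀ x : ℤ, T'.lower.ht x = spreadHt T.lower s x) ∧
  ∃ Q : ℤ,
    EligibleCol (spreadHt T.upper s) (spreadTiles s T.tiles) Q ∧
    (∀ c : ℤ, EligibleCol (spreadHt T.upper s) (spreadTiles s T.tiles) c → c ≤ Q) ∧
    (∀ x : ℤ, T'.upper.ht x =
      if s < x ∧ x < Q then spreadHt T.upper s x + 2 else spreadHt T.upper s x) ∧
    T'.tiles = spreadTiles s T.tiles ∪
      (Finset.Ioo s Q).image (fun x => ({(x, spreadHt T.upper s x)} : Finset (ℤ × ℤ)))

/-- `s` is the special column of `T`: its rightmost eligible column. -/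
def SpecialCol {n : ℕ} (T : DyckTiling n) (s : ℤ) : Prop :=
  EligibleCol T.upper.ht T.tiles s ∧ ∀ c : ℤ, EligibleCol T.upper.ht T.tiles c → c ≤ s

/-- In the strip-shrink map applied to `T'` with special column `s`, a one-box tile is
removed at column `x`: `x` is right of `s` and there is a one-box tile there that is
part of an up step of the upper boundary. -/
def StripRemovedAt {n : ℕ} (T' : DyckTiling n) (s x : ℤ) : Prop :=
  s < x ∧ T'.upper.ht x = T'.upper.ht (x - 1) + 1 ∧
    ({(x, T'.upper.ht x - 2)} : Finset (ℤ × ℤ)) ∈ T'.tiles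

instance {n : ℕ} (T' : DyckTiling n) (s x : ℤ) : Decidable (StripRemovedAt T' s x) := by
  unfold StripRemovedAt; infer_instance

/-- `(T, s)` is the result of the strip-shrink map applied to `T'`: `s` is the special
column of `T'`; all one-box tiles right of `s` lying on up steps of the upper boundary
are removed; and the result is the spread of `T` at `s`. -/
def StripShrinkRel {n : ℕ} (T' : DyckTiling (n + 1)) (T : DyckTiling n) (s : ℤ) : Prop :=
  SpecialCol T' s ∧
  (∀ x : ℤ, spreadHt T.lower s x = T'.lower.ht x) ∧
  (∀ x : ℤ, spreadHt T.upper s x =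
    if StripRemovedAt T' s x then T'.upper.ht x - 2 else T'.upper.ht x) ∧
  spreadTiles s T.tiles =
    T'.tiles \ (((Finset.Ioc s ((n : ℤ) + 1)).filter fun x => StripRemovedAt T' s x).image
      fun x => ({(x, T'.upper.ht x - 2)} : Finset (ℤ × ℤ)))

/-- `(T, s)` is the result of the ribbon-shrink map applied to `T'`: `s` is the special
column of `T'`; the maximal run of topmost one-box tiles in columns `s+1, s+2, …` is
removed; and the result is the spread of `T` at `s`. -/
def RibbonShrinkRel {n : ℕ} (T' : DyckTiling (n + 1)) (T : DyckTiling n) (s : ℤ) : Prop :=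
  SpecialCol T' s ∧
  ∃ r : ℤ, s < r ∧
    (∀ x : ℤ, s < x → x < r → ({(x, T'.upper.ht x - 2)} : Finset (ℤ × ℤ)) ∈ T'.tiles) ∧
    ({(r, T'.upper.ht r - 2)} : Finset (ℤ × ℤ)) ∉ T'.tiles ∧
    (∀ x : ℤ, spreadHt T.lower s x = T'.lower.ht x) ∧
    (∀ x : ℤ, spreadHt T.upper s x =
      if s < x ∧ x < r then T'.upper.ht x - 2 else T'.upper.ht x) ∧
    spreadTiles s T.tiles =
      T'.tiles \ ((Finset.Ioo s r).image fun x => ({(x, T'.upper.ht x - 2)} : Finset (ℤ × ℤ)))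

/-- `IsDTS n p T`: `T` is the Dyck tiling `DTS(p_1, …, p_n)` (indices 0-based, so the
growth column for step `i` is `p i - i`). -/
inductive IsDTS : (n : ℕ) → (Fin n → ℕ) → DyckTiling n → Prop where
  | nil (p : Fin 0 → ℕ) (T : DyckTiling 0) : IsDTS 0 p T
  | cons (n : ℕ) (p : Fin (n + 1) → ℕ) (T : DyckTiling n) (T' : DyckTiling (n + 1)) :
      IsDTS n (fun i => p i.castSucc) T →
      StripGrowRel T ((p (Fin.last n) : ℤ) - n) T' → IsDTS (n + 1) p T'

/-- `IsDTR n p T`: `T` is the Dyck tiling `DTR(p_1, …, p_n)`. -/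
inductive IsDTR : (n : ℕ) → (Fin n → ℕ) → DyckTiling n → Prop where
  | nil (p : Fin 0 → ℕ) (T : DyckTiling 0) : IsDTR 0 p T
  | cons (n : ℕ) (p : Fin (n + 1) → ℕ) (T : DyckTiling n) (T' : DyckTiling (n + 1)) :
      IsDTR n (fun i => p i.castSucc) T →
      RibbonGrowRel T ((p (Fin.last n) : ℤ) - n) T' → IsDTR (n + 1) p T'

/-- `T = DTS(λ, σ)`. -/
def IsDTSof {n : ℕ} (lam : DyckPath n) (σ : Equiv.Perm (Fin n)) (T : DyckTiling n) : Prop :=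
  ∃ C : ChordLabeling lam, IsStandardization C.l σ ∧ IsDTS n (seqOf C) T

/-- `T = DTR(λ, σ)`. -/
def IsDTRof {n : ℕ} (lam : DyckPath n) (σ : Equiv.Perm (Fin n)) (T : DyckTiling n) : Prop :=
  ∃ C : ChordLabeling lam, IsStandardization C.l σ ∧ IsDTR n (seqOf C) T

/-- Increment `a` if it exceeds `p`. -/
def bump (p a : ℕ) : ℕ := if p < a then a + 1 else a

/-- The perfect matching `match(p_1, …, p_n)` of `{1, …, 2n}`. -/
def matchSeq : (n : ℕ) → (Fin n → ℕ) → Finset (ℕ × ℕ)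
  | 0, _ => ∅
  | n + 1, p =>
    ((matchSeq n fun i => p i.castSucc).image fun q =>
      (bump (p (Fin.last n)) q.1, bump (p (Fin.last n)) q.2)) ∪
      {(p (Fin.last n) + 1, 2 * (n + 1))}

/-- The number of nestings of a matching: pairs `(a,b)`, `(c,d)` with `c < a < b < d`. -/
def nestings (M : Finset (ℕ × ℕ)) : ℕ :=
  ((M ×ˢ M).filter fun q => q.2.1 < q.1.1 ∧ q.1.1 < q.1.2 ∧ q.1.2 < q.2.2).card

/-- `w` is the min-word of `M`: the list of the smaller elements of the pairs of `M`,
sorted by the larger elements. -/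
def IsMinWord (n : ℕ) (M : Finset (ℕ × ℕ)) (w : Fin n → ℕ) : Prop :=
  ∃ b : Fin n → ℕ, StrictMono b ∧ (∀ i, w i < b i) ∧
    M = Finset.univ.image fun i => (w i, b i)

/-- The number of tiles of `T` containing boxes over both endpoint columns of the
chord with endpoints at step positions `p < q`. -/
def chordTileCount {n : ℕ} (T : DyckTiling n) (p q : ℕ) : ℕ :=
  (T.tiles.filter fun t =>
    (∃ c ∈ t, (c : ℤ × ℤ).1 = (p : ℤ) + 1 - n) ∧ (∃ c ∈ t, (c : ℤ × ℤ).1 = (q : ℤ) - n)).card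

/-- A Dyck tableau of order `n` over the zigzag path `Z` of order `n+1`: a skew shape
`Z/μ` with `n` dots, one in each column of the skew shape through a valley of `Z`. -/
structure DyckTableau (n : ℕ) (Z : DyckPath (n + 1)) where
  upper : DyckPath (n + 1)
  below : ∀ x : ℤ, Z.ht x ≤ upper.ht x
  dots : Finset (ℤ × ℤ)
  sub : dots ⊆ skewCells Z upper
  card_dots : dots.card = n
  valley : ∀ x : ℤ, Z.ht (x - 1) = Z.ht x + 1 → Z.ht (x + 1) = Z.ht x + 1 →
    (dots.filter fun c => c.1 = x).card = 1

/-- The `q`-integer `[m]_q = 1 + q + ⋯ + q^(m-1)` as a polynomial. -/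
def qint (m : ℕ) : Polynomial ℤ := ∑ i ∈ Finset.range m, Polynomial.X ^ i

/-- The `q`-factorial `[n]_q!`. -/
def qfact (n : ℕ) : Polynomial ℤ := ∏ i ∈ Finset.range n, qint (i + 1)


/-! The tiling `DTR(λ, σ)` grows one chord at a time. Growing at a column makes that column the
special one, so step `i + 1` adds a ribbon exactly when `i` is a descent, and this ribbon runs from
the growth column of chord `i + 1` to that of chord `i`: it has `p_i - p_{i+1} + 1` boxes, each a
tile of its own. Later steps only stretch the ribbon, and at the end it occupies the columns between
the right endpoint of chord `i + 1` and the left endpoint of chord `i`. Hence the tiles are counted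
by the differences `p_i - p_{i+1}` and the boxes by the endpoints lying between these two chords;
both numbers are read off from the words of left and right endpoints. The symmetric difference in
the area formula consists of the chords nested in chord `i` or in chord `i + 1`. -/

/-! ### Heights and area -/

namespace DyckPath

theorem ht_zero (P : DyckPath 0) (x : ℤ) : P.ht x = 0 := by
  simp [ht]

variable {n : ℕ}

theorem ht_nonneg (P : DyckPath n) {x : ℤ} (hx : x ∈ Icc (-(n : ℤ)) n) : 0 ≤ P.ht x := by
  rw [mem_Icc] at hx
  have hcount := P.nonneg (x + n).toNat (by omega)
  simp only [Int.lt_toNat] at hcount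
  unfold ht
  omega

theorem ht_le (P : DyckPath n) (x : ℤ) : P.ht x ≤ n := by
  have hup : #{i : Fin (2 * n) | ((i : ℕ) : ℤ) < x + n ∧ P.step i = true} ≤ n :=
    (card_le_card (monotone_filter_right _ fun _ _ hi => hi.2)).trans_eq P.balanced
  unfold ht
  omega

theorem ht_sub_emod_two (P : DyckPath n) {x : ℤ} (hx : x ∈ Icc (-(n : ℤ)) n) :
    (P.ht x - x - n) % 2 = 0 := by
  rw [mem_Icc] at hx
  have hsteps : #{i : Fin (2 * n) | ((i : ℕ) : ℤ) < x + n} = (x + n).toNat := by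
    simp only [← Int.lt_toNat, Fin.card_filter_val_lt]
    omega
  have hsplit := card_filter_add_card_filter_not
    (s := {i : Fin (2 * n) | ((i : ℕ) : ℤ) < x + n}) (fun i => P.step i = true)
  simp only [filter_filter, Bool.not_eq_true, hsteps] at hsplit
  unfold ht
  omega

end DyckPath

namespace DyckTiling

variable {n : ℕ} (T : DyckTiling n)

theorem two_mul_card_skewCells_column {x : ℤ} (hx : x ∈ Icc (-(n : ℤ)) n) :
    2 * (#{c ∈ skewCells T.lower T.upper | c.1 = x} : ℤ) = T.upper.ht x - T.lower.ht x := by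
  have hnonneg := T.lower.ht_nonneg hx
  have hle := T.upper.ht_le x
  have hlower := T.lower.ht_sub_emod_two hx
  have hupper := T.upper.ht_sub_emod_two hx
  have hbelow := T.below x
  have hcolumn : {c ∈ skewCells T.lower T.upper | c.1 = x} =
      (range ((T.upper.ht x - T.lower.ht x) / 2).toNat).image
        fun k : ℕ => (x, T.lower.ht x + 2 * k) := by
    ext ⟨y, z⟩
    simp only [skewCells, mem_filter, mem_product, mem_Icc, mem_image, mem_range, Prod.mk.injEq]
    constructor
    · rintro ⟨⟨-, hlz, hzu, hz⟩, rfl⟩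
      exact ⟨((z - T.lower.ht y) / 2).toNat, by omega, rfl, by omega⟩
    · rintro ⟨k, hk, rfl, rfl⟩
      refine ⟨⟨⟨mem_Icc.1 hx, ?_, ?_⟩, ?_, ?_, ?_⟩, rfl⟩ <;> omega
  have hinj : Function.Injective fun k : ℕ => (x, T.lower.ht x + 2 * (k : ℤ)) := fun a b hab => by
    simpa using hab
  rw [hcolumn, card_image_of_injective _ hinj, card_range]
  omega

theorem two_mul_area :
    2 * (T.area : ℤ) = ∑ x ∈ Icc (-(n : ℤ)) n, (T.upper.ht x - T.lower.ht x) := by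
  have hmaps : ∀ c ∈ skewCells T.lower T.upper, c.1 ∈ Icc (-(n : ℤ)) n := fun c hc =>
    (mem_product.1 (mem_filter.1 hc).1).1
  rw [area, card_eq_sum_card_fiberwise hmaps, Nat.cast_sum, mul_sum]
  exact sum_congr rfl fun x hx => T.two_mul_card_skewCells_column hx

theorem mem_skewCells_of_mem {t : Finset (ℤ × ℤ)} (ht : t ∈ T.tiles) {c : ℤ × ℤ} (hc : c ∈ t) :
    c ∈ skewCells T.lower T.upper :=
  T.cover ▸ mem_biUnion.2 ⟨t, ht, hc⟩

theorem numTiles_eq_zero (hn : n ≤ 1) : T.numTiles = 0 := by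
  refine card_eq_zero.2 (eq_empty_of_forall_notMem fun t ht => ?_)
  obtain ⟨a, b, f, hab, -, -, -, rfl⟩ := T.isDyck t ht
  have hcell := T.mem_skewCells_of_mem ht (mem_image_of_mem _ (left_mem_Icc.2 hab))
  simp only [skewCells, mem_filter, mem_product, mem_Icc] at hcell
  have hle := T.upper.ht_le a
  omega

end DyckTiling

/-! ### Spreading and ribbon growth -/

/-- The column of a Dyck path that the spread at column `s` moves to column `x`; column `s` itself
has the three copies `s - 1`, `s` and `s + 1`. -/
def unspreadCol (s x : ℤ) : ℤ := if x < s then x + 1 else if x = s then s else x - 1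

theorem unspreadCol_of_lt {s x : ℤ} (h : x < s) : unspreadCol s x = x + 1 := if_pos h

theorem unspreadCol_self (s : ℤ) : unspreadCol s s = s := by simp [unspreadCol]

theorem unspreadCol_of_gt {s x : ℤ} (h : s < x) : unspreadCol s x = x - 1 := by
  rw [unspreadCol, if_neg h.not_gt, if_neg h.ne']

theorem exists_ne_unspreadCol_eq (s x : ℤ) : ∃ y ≠ s, unspreadCol s y = x := by
  rcases le_or_gt x s with h | h
  · exact ⟨x - 1, by omega, by rw [unspreadCol_of_lt (by omega), sub_add_cancel]⟩
  · exact ⟨x + 1, by omega, by rw [unspreadCol_of_gt (by omega), add_sub_cancel_right]⟩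

theorem spreadHt_eq {n : ℕ} (P : DyckPath n) (s x : ℤ) :
    spreadHt P s x = P.ht (unspreadCol s x) + if x = s then 1 else 0 := by
  unfold spreadHt unspreadCol
  split_ifs <;> omega

theorem mem_spreadTile {s : ℤ} {t : Finset (ℤ × ℤ)} {x z : ℤ} :
    (x, z) ∈ spreadTile s t ↔ (unspreadCol s x, z - if x = s then 1 else 0) ∈ t := by
  simp only [spreadTile, mem_union, mem_image, mem_filter, Prod.exists, Prod.mk.injEq]
  constructor
  · rintro ((⟨a, b, ⟨hab, ha⟩, rfl, rfl⟩ | ⟨a, b, ⟨hab, rfl⟩, rfl, rfl⟩) |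
      ⟨a, b, ⟨hab, ha⟩, rfl, rfl⟩)
    · rwa [unspreadCol_of_lt (by omega), if_neg (by omega), sub_add_cancel, sub_zero]
    · rwa [unspreadCol_self, if_pos rfl, add_sub_cancel_right]
    · rwa [unspreadCol_of_gt (by omega), if_neg (by omega), add_sub_cancel_right, sub_zero]
  · intro hmem
    rcases lt_trichotomy x s with h | rfl | h
    · rw [unspreadCol_of_lt h, if_neg h.ne, sub_zero] at hmem
      exact Or.inl (Or.inl ⟨_, _, ⟨hmem, by omega⟩, by omega, rfl⟩)
    · rw [unspreadCol_self, if_pos rfl] at hmem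
      exact Or.inl (Or.inr ⟨_, _, ⟨hmem, rfl⟩, rfl, by omega⟩)
    · rw [unspreadCol_of_gt h, if_neg h.ne', sub_zero] at hmem
      exact Or.inr ⟨_, _, ⟨hmem, by omega⟩, by omega, rfl⟩

theorem spreadTile_injective (s : ℤ) : Function.Injective (spreadTile s) := by
  intro t u htu
  ext ⟨x, z⟩
  obtain ⟨y, hy, rfl⟩ := exists_ne_unspreadCol_eq s x
  simpa only [mem_spreadTile, if_neg hy, sub_zero] using Finset.ext_iff.1 htu (y, z)

theorem card_spreadTiles (s : ℤ) (ts : Finset (Finset (ℤ × ℤ))) : #(spreadTiles s ts) = #ts :=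
  card_image_of_injective _ (spreadTile_injective s)

theorem spreadTile_singleton {s c : ℤ} (h : s < c) (z : ℤ) :
    spreadTile s {(c, z)} = {(c + 1, z)} := by
  ext ⟨x, y⟩
  simp only [mem_spreadTile, mem_singleton, Prod.mk.injEq, unspreadCol]
  omega

theorem singleton_mem_spreadTiles {s c z : ℤ} (h : s + 1 < c) (ts : Finset (Finset (ℤ × ℤ))) :
    {(c, z)} ∈ spreadTiles s ts ↔ {(c - 1, z)} ∈ ts := by
  have hshift : spreadTile s {(c - 1, z)} = {(c, z)} := by
    rw [spreadTile_singleton (by omega), sub_add_cancel]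
  rw [← hshift]
  exact (spreadTile_injective s).mem_finset_image

theorem singleton_self_notMem_spreadTiles (s z : ℤ) (ts : Finset (Finset (ℤ × ℤ))) :
    {(s, z)} ∉ spreadTiles s ts := by
  intro hmem
  obtain ⟨t, -, ht⟩ := mem_image.1 hmem
  have hcenter : (s, z) ∈ spreadTile s t := ht ▸ mem_singleton_self _
  have hleft : (s - 1, z - 1) ∈ spreadTile s t := by
    rw [mem_spreadTile, unspreadCol_self, if_pos rfl] at hcenter
    rwa [mem_spreadTile, unspreadCol_of_lt (by omega), if_neg (by omega), sub_add_cancel, sub_zero]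
  simp [ht] at hleft

/-- The one-box tiles resting on the graph of `h` at the columns of `I`. -/
def ribbonTiles (h : ℤ → ℤ) (I : Finset ℤ) : Finset (Finset (ℤ × ℤ)) :=
  I.image fun x => {(x, h x)}

theorem card_ribbonTiles (h : ℤ → ℤ) (I : Finset ℤ) : #(ribbonTiles h I) = #I :=
  card_image_of_injective _ fun _ _ hxy => congrArg Prod.fst (singleton_injective hxy)

theorem singleton_mem_ribbonTiles {h : ℤ → ℤ} {I : Finset ℤ} {x z : ℤ} :
    {(x, z)} ∈ ribbonTiles h I ↔ x ∈ I ∧ h x = z := by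
  simp only [ribbonTiles, mem_image, singleton_inj, Prod.mk.injEq]
  exact ⟨fun ⟨y, hy, hyx, hyz⟩ => hyx ▸ ⟨hy, hyz⟩, fun ⟨hx, hz⟩ => ⟨x, hx, rfl, hz⟩⟩

namespace DyckTiling

variable {n : ℕ} (T : DyckTiling n)

theorem eligibleCol_spread_self (s : ℤ) :
    EligibleCol (spreadHt T.upper s) (spreadTiles s T.tiles) s := by
  refine ⟨?_, singleton_self_notMem_spreadTiles _ _ _⟩
  rw [spreadHt_eq, spreadHt_eq, unspreadCol_self, unspreadCol_of_lt (by omega), if_pos rfl,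
    if_neg (by omega), sub_add_cancel, add_zero]

theorem eligibleCol_spread_of_gt {s c : ℤ} (hsc : s < c) :
    EligibleCol (spreadHt T.upper s) (spreadTiles s T.tiles) c ↔
      s + 1 < c ∧ EligibleCol T.upper.ht T.tiles (c - 1) := by
  rcases eq_or_lt_of_le (Int.add_one_le_of_lt hsc) with rfl | hc
  · refine iff_of_false (fun ⟨hup, _⟩ => ?_) (fun hlt => lt_irrefl _ hlt.1)
    rw [add_sub_cancel_right, spreadHt_eq, spreadHt_eq, unspreadCol_of_gt hsc, unspreadCol_self,
      if_neg (by omega), if_pos rfl, add_sub_cancel_right] at hup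
    omega
  · have hht : ∀ x, s < x → spreadHt T.upper s x = T.upper.ht (x - 1) := fun x hx => by
      rw [spreadHt_eq, unspreadCol_of_gt hx, if_neg hx.ne', add_zero]
    rw [EligibleCol, EligibleCol, hht c hsc, hht (c - 1) (by omega), singleton_mem_spreadTiles hc]
    exact (and_iff_right hc).symm

theorem disjoint_spreadTiles_ribbonTiles (s : ℤ) (I : Finset ℤ) :
    Disjoint (spreadTiles s T.tiles) (ribbonTiles (spreadHt T.upper s) I) := by
  rw [disjoint_left]
  intro t hspread hribbon
  obtain ⟨x, -, rfl⟩ := mem_image.1 hribbon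
  obtain ⟨u, hu, hux⟩ := mem_image.1 hspread
  have hcell : (x, spreadHt T.upper s x) ∈ spreadTile s u := hux ▸ mem_singleton_self _
  rw [mem_spreadTile, spreadHt_eq, add_sub_cancel_right] at hcell
  have hbelow : T.upper.ht (unspreadCol s x) + 2 ≤ T.upper.ht (unspreadCol s x) :=
    (mem_filter.1 (T.mem_skewCells_of_mem hu hcell)).2.2.1
  omega

end DyckTiling

namespace RibbonGrowRel

variable {n : ℕ} {T : DyckTiling n} {s : ℤ} {T' : DyckTiling (n + 1)}

theorem specialCol (h : RibbonGrowRel T s T') : SpecialCol T' s := by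
  obtain ⟨-, Q, hQ, hmax, hup, htiles⟩ := h
  change _ = _ ∪ ribbonTiles _ _ at htiles
  have hsQ : s ≤ Q := hmax s (T.eligibleCol_spread_self s)
  have hup_of_le : ∀ x ≤ s, T'.upper.ht x = spreadHt T.upper s x := fun x hx => by
    rw [hup, if_neg (by omega)]
  have hup_of_ge : ∀ x, Q ≤ x → T'.upper.ht x = spreadHt T.upper s x := fun x hx => by
    rw [hup, if_neg (by omega)]
  constructor
  · obtain ⟨hstep, hnotMem⟩ := T.eligibleCol_spread_self s
    refine ⟨by rwa [hup_of_le s le_rfl, hup_of_le (s - 1) (by omega)], ?_⟩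
    rw [hup_of_le s le_rfl, htiles, mem_union, singleton_mem_ribbonTiles, mem_Ioo]
    rintro (hmem | ⟨hmem, -⟩)
    · exact hnotMem hmem
    · exact hmem.1.false
  · rintro c ⟨hstep, hnotMem⟩
    by_contra! hsc
    rw [htiles, mem_union, singleton_mem_ribbonTiles, mem_Ioo, not_or] at hnotMem
    rcases lt_trichotomy c Q with hcQ | rfl | hQc
    · refine hnotMem.2 ⟨⟨hsc, hcQ⟩, ?_⟩
      rw [hup, if_pos ⟨hsc, hcQ⟩, add_sub_cancel_right]
    · have hlt := ((T.eligibleCol_spread_of_gt hsc).1 hQ).1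
      rw [hup_of_ge c le_rfl, hup, if_pos (by omega), hQ.1] at hstep
      omega
    · rw [hup_of_ge c hQc.le] at hstep hnotMem
      rw [hup_of_ge (c - 1) (by omega)] at hstep
      exact hQc.not_ge (hmax c ⟨hstep, hnotMem.1⟩)

/-- The column `c` stands for the special column of `T`; a tiling of order `0` has none, and there
`c = s` plays its part. -/
theorem upper_ht_and_tiles {c : ℤ} (h : RibbonGrowRel T s T')
    (hmax : ∀ b, EligibleCol T.upper.ht T.tiles b → b ≤ c)
    (hc : s < c → EligibleCol T.upper.ht T.tiles c) :
    (∀ x, T'.upper.ht x = spreadHt T.upper s x + if x ∈ Ioc s c then 2 else 0) ∧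
      T'.tiles = spreadTiles s T.tiles ∪ ribbonTiles (spreadHt T.upper s) (Ioc s c) := by
  obtain ⟨-, Q, hQ, hQmax, hup, htiles⟩ := h
  have hsQ : s ≤ Q := hQmax s (T.eligibleCol_spread_self s)
  have hQc : s < Q → Q ≤ c + 1 := fun hlt => by
    have := hmax _ ((T.eligibleCol_spread_of_gt hlt).1 hQ).2
    omega
  have hcQ : s < c → c + 1 ≤ Q := fun hlt =>
    hQmax _ ((T.eligibleCol_spread_of_gt (by omega)).2
      ⟨by omega, by rw [add_sub_cancel_right]; exact hc hlt⟩)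
  have hIoo : Ioo s Q = Ioc s c := by
    ext x
    simp only [mem_Ioo, mem_Ioc]
    omega
  refine ⟨fun x => ?_, by rw [htiles, ribbonTiles, hIoo]⟩
  simp only [hup, ← mem_Ioo, hIoo]
  split_ifs <;> simp only [add_zero]

theorem ht_sub_ht {c : ℤ} (h : RibbonGrowRel T s T')
    (hmax : ∀ b, EligibleCol T.upper.ht T.tiles b → b ≤ c)
    (hc : s < c → EligibleCol T.upper.ht T.tiles c) (x : ℤ) :
    T'.upper.ht x - T'.lower.ht x = T.upper.ht (unspreadCol s x) - T.lower.ht (unspreadCol s x) +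
      if x ∈ Ioc s c then 2 else 0 := by
  rw [(h.upper_ht_and_tiles hmax hc).1, h.1, spreadHt_eq, spreadHt_eq]
  ring

theorem numTiles {c : ℤ} (h : RibbonGrowRel T s T')
    (hmax : ∀ b, EligibleCol T.upper.ht T.tiles b → b ≤ c)
    (hc : s < c → EligibleCol T.upper.ht T.tiles c) :
    T'.numTiles = T.numTiles + #(Ioc s c) := by
  rw [DyckTiling.numTiles, (h.upper_ht_and_tiles hmax hc).2,
    card_union_of_disjoint (T.disjoint_spreadTiles_ribbonTiles _ _),
    card_spreadTiles, card_ribbonTiles, DyckTiling.numTiles]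

end RibbonGrowRel

/-! ### Words and their standardizations -/

theorem sum_filter_val_lt_succ {n k : ℕ} (hk : k < n) {M : Type*} [AddCommMonoid M]
    (p : Fin n → Prop) [DecidablePred p] (f : Fin n → M) :
    ∑ j with j.val < k + 1 ∧ p j, f j =
      ∑ j with j.val < k ∧ p j, f j + if p ⟨k, hk⟩ then f ⟨k, hk⟩ else 0 := by
  have hlast : (if p ⟨k, hk⟩ then f ⟨k, hk⟩ else 0) =
      ∑ j with j = ⟨k, hk⟩ ∧ p j, f j := by
    simp only [filter_and, filter_eq', mem_univ, if_true]
    split_ifs with hp <;> simp [hp]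
  rw [hlast, ← sum_union]
  · congr 1
    ext j
    simp only [mem_filter, mem_univ, true_and, mem_union, Fin.ext_iff, ← or_and_right]
    exact and_congr_left' Nat.lt_succ_iff_lt_or_eq
  · rw [disjoint_filter]
    rintro j - ⟨hj, -⟩ ⟨rfl, -⟩
    exact hj.false

theorem card_filter_val_lt_and_lt_mono {n : ℕ} (w : Fin n → ℕ) (k : ℕ) :
    Monotone fun x => #{j | j.val < k ∧ w j < x} := fun _ _ hxy =>
  card_le_card (monotone_filter_right _ fun _ _ h => ⟨h.1, h.2.trans_le hxy⟩)

theorem card_filter_val_lt_and_lt_lt {n k y : ℕ} (w : Fin n → ℕ) {i : Fin n} (hi : (i : ℕ) < k)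
    (hy : w i < y) : #{j | j.val < k ∧ w j < w i} < #{j | j.val < k ∧ w j < y} := by
  refine card_lt_card ((ssubset_iff_of_subset ?_).2 ⟨i, by simp [hi, hy], by simp⟩)
  exact monotone_filter_right _ fun _ _ h => ⟨h.1, h.2.trans hy⟩

theorem nextIdx_eq {n : ℕ} {i : Fin n} (hi : (i : ℕ) + 1 < n) : nextIdx i = ⟨i + 1, hi⟩ :=
  Fin.ext (Nat.mod_eq_of_lt hi)

theorem lt_nextIdx {n : ℕ} {i : Fin n} (hi : (i : ℕ) + 1 < n) : i < nextIdx i := by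
  rw [nextIdx_eq hi]
  exact Nat.lt_succ_self _

theorem lt_nextIdx_iff {n : ℕ} {i k : Fin n} (hi : (i : ℕ) + 1 < n) : k < nextIdx i ↔ k ≤ i := by
  rw [nextIdx_eq hi]
  exact Nat.lt_succ_iff

/-- The descents `i` of `w` such that both `i` and `i + 1` are among the first `k` positions. -/
def prefixDescents {n : ℕ} (w : Fin n → ℕ) (k : ℕ) : Finset (Fin n) :=
  {i | (i : ℕ) + 1 < k ∧ w (nextIdx i) < w i}

theorem sum_prefixDescents_succ {n : ℕ} (w : Fin n → ℕ) (i : Fin n) {M : Type*} [AddCommMonoid M]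
    (f : Fin n → M) : ∑ j ∈ prefixDescents w (i + 2), f j =
      ∑ j ∈ prefixDescents w (i + 1), f j + if w (nextIdx i) < w i then f i else 0 := by
  simp only [prefixDescents, Nat.add_lt_add_iff_right]
  exact sum_filter_val_lt_succ i.2 _ f

theorem prefixDescents_of_le_one {n k : ℕ} (w : Fin n → ℕ) (hk : k ≤ 1) :
    prefixDescents w k = ∅ :=
  filter_eq_empty_iff.2 fun i _ h => by omega

/-- The left embraced positions of `w` at `i`, the counterpart of `remSet w i`. -/
def lemSet {n : ℕ} (w : Fin n → ℕ) (i : Fin n) : Finset (Fin n) :=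
  {k | k < i ∧ w (nextIdx i) < w k ∧ w k < w i}

namespace IsStandardization

variable {n : ℕ} {w : Fin n → ℕ} {σ : Equiv.Perm (Fin n)}

theorem injective (h : IsStandardization w σ) : Function.Injective w := fun i j hij =>
  σ.injective (le_antisymm (not_lt.1 fun hlt => ((h j i).1 hlt).ne' hij)
    (not_lt.1 fun hlt => ((h i j).1 hlt).ne hij))

theorem permWord_eq_card (h : IsStandardization w σ) (i : Fin n) :
    permWord σ i = #{k | w k < w i} := by
  have hIio : map σ.toEmbedding {k | w k < w i} = Iio (σ i) := by
    ext k
    rw [mem_map_equiv, mem_filter_univ, mem_Iio, ← h, Equiv.apply_symm_apply]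
  rw [← card_map σ.toEmbedding, hIio, Fin.card_Iio, permWord]

theorem descentFinset_permWord (h : IsStandardization w σ) :
    descentFinset (permWord σ) = descentFinset w := by
  simp only [descentFinset, permWord, Fin.val_fin_lt, h _ _]

theorem remSet_permWord (h : IsStandardization w σ) (i : Fin n) :
    remSet (permWord σ) i = remSet w i := by
  simp only [remSet, permWord, Fin.val_fin_lt, h _ _]

theorem permWord_eq_of_descent (h : IsStandardization w σ) {i : Fin n}
    (hdes : w (nextIdx i) < w i) :
    permWord σ i = permWord σ (nextIdx i) + 1 + #(lemSet w i) + #(remSet w i) := by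
  have hsplit : ({k | w k < w i} : Finset (Fin n)) =
      insert (nextIdx i) ({k | w k < w (nextIdx i)} : Finset (Fin n)) ∪
        (lemSet w i ∪ remSet w i) := by
    ext k
    have heq : w k = w (nextIdx i) ↔ k = nextIdx i := h.injective.eq_iff
    have hne : w k < w i → k ≠ i := fun hlt hki => hlt.ne (hki ▸ rfl)
    simp only [lemSet, remSet, mem_union, mem_insert, mem_filter_univ]
    omega
  have hdisj : Disjoint (lemSet w i) (remSet w i) :=
    disjoint_filter.2 fun k _ hlem hrem => hlem.1.asymm hrem.1
  have hdisj' : Disjoint (insert (nextIdx i) ({k | w k < w (nextIdx i)} : Finset (Fin n)))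
      (lemSet w i ∪ remSet w i) := by
    rw [disjoint_left]
    intro k
    simp only [lemSet, remSet, mem_union, mem_insert, mem_filter_univ]
    rintro (rfl | hk) <;> omega
  rw [h.permWord_eq_card, h.permWord_eq_card, hsplit, card_union_of_disjoint hdisj',
    card_union_of_disjoint hdisj, card_insert_of_notMem (by simp)]
  ring

end IsStandardization

/-! ### Endpoints of chords -/

theorem IsChord.right_lt_right {n : ℕ} {P : DyckPath n} {p q p' q' : ℕ}
    (h : IsChord P p q) (h' : IsChord P p' q') (hp : p < p') (hq : p' ≤ q) : q' < q := by
  obtain ⟨-, -, -, -, hend, habove⟩ := h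
  obtain ⟨-, -, -, -, hend', habove'⟩ := h'
  have hstart := habove p' hp hq
  by_contra! hle
  rcases hle.eq_or_lt with rfl | hlt
  · omega
  · have := habove' (q + 1) (by omega) (by omega)
    omega

namespace ChordLabeling

variable {n : ℕ} {P : DyckPath n} (C : ChordLabeling P)

theorem left_lt_right (i : Fin n) : C.l i < C.r i := (C.chord i).1

theorem right_lt_right_of_left_le {i j : Fin n} (hl : C.l i < C.l j) (hr : C.l j ≤ C.r i) :
    C.r j < C.r i :=
  (C.chord i).right_lt_right (C.chord j) hl hr

theorem left_outside {j i : Fin n} (hji : j < i) : C.l j < C.l i ∨ C.r i < C.l j := by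
  have hne : C.l j ≠ C.l i := C.inj.ne hji.ne
  by_contra! hmem
  have hlt : C.l i < C.l j := by omega
  exact hji.asymm (C.natural j i hlt (C.right_lt_right_of_left_le hlt hmem.2))

theorem right_outside {j i : Fin n} (hji : j < i) : C.r j < C.l i ∨ C.r i < C.r j := by
  have hlr := C.left_lt_right j
  have hout := C.left_outside hji
  have hnest := C.right_lt_right_of_left_le (i := j) (j := i)
  omega

theorem right_nextIdx_lt_left {i : Fin n} (hi : (i : ℕ) + 1 < n)
    (hdes : C.l (nextIdx i) < C.l i) : C.r (nextIdx i) < C.l i :=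
  (C.left_outside (lt_nextIdx hi)).resolve_left hdes.asymm

/-- The chords nested in chord `i`. -/
def nested (i : Fin n) : Finset (Fin n) := {k | C.l i < C.l k ∧ C.r k < C.r i}

theorem right_injective : Function.Injective C.r := by
  intro i j hr
  have hi := C.left_lt_right i
  have hj := C.left_lt_right j
  have hij := C.right_lt_right_of_left_le (i := i) (j := j)
  have hji := C.right_lt_right_of_left_le (i := j) (j := i)
  exact C.inj (by omega)

theorem card_filter_right_lt_right (i : Fin n) :
    #{k | C.r k < C.r i} = #{k | C.r k < C.l i} + #(C.nested i) := by
  rw [← card_union_of_disjoint]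
  · congr 1
    ext k
    have hil := C.left_lt_right i
    have hcross := C.right_lt_right_of_left_le (i := k) (j := i)
    have hinj : C.l k = C.l i → k = i := fun h => C.inj h
    have hr : k = i → C.r k = C.r i := congrArg C.r
    simp only [nested, mem_union, mem_filter_univ]
    omega
  · refine disjoint_filter.2 fun k _ hlt hnested => ?_
    have := C.left_lt_right k
    omega

theorem card_filter_left_lt_right (i : Fin n) :
    #{k | C.l k < C.r i} = #{k | C.l k < C.l i} + 1 + #(C.nested i) := by
  have hsplit : ({k | C.l k < C.r i} : Finset (Fin n)) =
      insert i ({k | C.l k < C.l i} : Finset (Fin n)) ∪ C.nested i := by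
    ext k
    have hkr := C.left_lt_right k
    have hil := C.left_lt_right i
    have hcross := C.right_lt_right_of_left_le (i := i) (j := k)
    have hinj : C.l k = C.l i ↔ k = i := C.inj.eq_iff
    simp only [nested, mem_union, mem_insert, mem_filter_univ]
    omega
  have hdisj :
      Disjoint (insert i ({k | C.l k < C.l i} : Finset (Fin n))) (C.nested i) := by
    rw [disjoint_left]
    intro k
    simp only [nested, mem_insert, mem_filter_univ]
    rintro (rfl | hk) <;> omega
  rw [hsplit, card_union_of_disjoint hdisj, card_insert_of_notMem (by simp)]

theorem remSet_left_sdiff_remSet_right {i : Fin n} (hi : (i : ℕ) + 1 < n)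
    (hdes : C.l (nextIdx i) < C.l i) :
    remSet C.l i \ remSet C.r i = C.nested (nextIdx i) := by
  have hright := C.right_nextIdx_lt_left hi hdes
  ext k
  simp only [remSet, nested, mem_sdiff, mem_filter_univ]
  constructor
  · rintro ⟨⟨hik, hnext, hki⟩, hnotMem⟩
    have hne : C.r k ≠ C.r (nextIdx i) := fun h =>
      hnext.ne' (congrArg C.l (C.right_injective h))
    have hri : C.r k < C.r i :=
      lt_of_le_of_ne (le_of_not_gt fun h => hik.asymm (C.natural i k hki h))
        (C.right_injective.ne hik.ne')
    exact ⟨hnext, lt_of_not_ge fun h => hnotMem ⟨hik, lt_of_le_of_ne h hne.symm, hri⟩⟩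
  · rintro ⟨hnext, hr⟩
    have hlr := C.left_lt_right k
    exact ⟨⟨(lt_nextIdx hi).trans (C.natural _ _ hnext hr), hnext, by omega⟩, by omega⟩

theorem remSet_right_sdiff_remSet_left {i : Fin n} (hi : (i : ℕ) + 1 < n)
    (hdes : C.l (nextIdx i) < C.l i) :
    remSet C.r i \ remSet C.l i = C.nested i := by
  have hright := C.right_nextIdx_lt_left hi hdes
  ext k
  have hlr := C.left_lt_right k
  simp only [remSet, nested, mem_sdiff, mem_filter_univ]
  constructor
  · rintro ⟨⟨hik, hnext, hki⟩, hnotMem⟩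
    have hnext_le : nextIdx i ≤ k := not_lt.1 fun h => hik.not_ge ((lt_nextIdx_iff hi).1 h)
    have hl_next : C.l (nextIdx i) ≤ C.l k :=
      le_of_not_gt fun h => hnext_le.not_gt (C.natural _ _ h hnext)
    have hne_next : C.l (nextIdx i) ≠ C.l k := fun h => hnext.ne (congrArg C.r (C.inj h))
    have hne : C.l k ≠ C.l i := C.inj.ne hik.ne'
    exact ⟨by omega, hki⟩
  · rintro ⟨hl, hr⟩
    exact ⟨⟨C.natural _ _ hl hr, by omega, hr⟩, by omega⟩

theorem card_symmDiff_remSet {i : Fin n} (hi : (i : ℕ) + 1 < n)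
    (hdes : C.l (nextIdx i) < C.l i) :
    #(symmDiff (remSet C.l i) (remSet C.r i)) = #(C.nested i) + #(C.nested (nextIdx i)) := by
  rw [symmDiff_def, sup_eq_union, card_union_of_disjoint disjoint_sdiff_sdiff,
    C.remSet_left_sdiff_remSet_right hi hdes, C.remSet_right_sdiff_remSet_left hi hdes, add_comm]

theorem seqOf_of_descent {i : Fin n} (hi : (i : ℕ) + 1 < n) (hdes : C.l (nextIdx i) < C.l i) :
    seqOf C i = seqOf C (nextIdx i) + #(lemSet C.l i) + #(lemSet C.r i) := by
  have hlt_next : ∀ {j : Fin n}, j < nextIdx i ↔ j < i ∨ j = i :=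
    (lt_nextIdx_iff hi).trans le_iff_lt_or_eq
  have hleft : ({j | j < i ∧ C.l j < C.l i} : Finset (Fin n)) =
      ({j | j < nextIdx i ∧ C.l j < C.l (nextIdx i)} : Finset (Fin n)) ∪ lemSet C.l i := by
    ext j
    have hinj : C.l j = C.l (nextIdx i) → ¬ j < i := fun h hji =>
      (hji.trans (lt_nextIdx hi)).ne (C.inj h)
    have hl : j = i → C.l j = C.l i := congrArg C.l
    simp only [lemSet, mem_union, mem_filter_univ, hlt_next]
    omega
  have hright : ({j | j < i ∧ C.r j < C.l i} : Finset (Fin n)) =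
      ({j | j < nextIdx i ∧ C.r j < C.l (nextIdx i)} : Finset (Fin n)) ∪ lemSet C.r i := by
    ext j
    have hout : j < i → C.r j < C.l i ∨ C.r i < C.r j := C.right_outside
    have hout_next : j < i → C.r j < C.l (nextIdx i) ∨ C.r (nextIdx i) < C.r j := fun hji =>
      C.right_outside (hji.trans (lt_nextIdx hi))
    have hir := C.left_lt_right i
    have hr : j = i → C.r j = C.r i := congrArg C.r
    simp only [lemSet, mem_union, mem_filter_univ, hlt_next]
    omega
  have hdisj_left : Disjoint ({j | j < nextIdx i ∧ C.l j < C.l (nextIdx i)} : Finset (Fin n))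
      (lemSet C.l i) :=
    disjoint_filter.2 fun j _ hj hlem => hj.2.asymm hlem.2.1
  have hdisj_right : Disjoint ({j | j < nextIdx i ∧ C.r j < C.l (nextIdx i)} : Finset (Fin n))
      (lemSet C.r i) :=
    disjoint_filter.2 fun j _ hj hlem =>
      (hj.2.trans (C.left_lt_right _)).asymm hlem.2.1
  rw [seqOf, seqOf, hleft, hright, card_union_of_disjoint hdisj_left,
    card_union_of_disjoint hdisj_right]
  ring

/-- The number of endpoints of the first `k` chords that precede step `x`. -/
def endpointRank (k x : ℕ) : ℕ := #{j | j.val < k ∧ C.l j < x} + #{j | j.val < k ∧ C.r j < x}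

theorem seqOf_eq_endpointRank (i : Fin n) : seqOf C i = C.endpointRank i (C.l i) := rfl

theorem endpointRank_mono (k : ℕ) : Monotone (C.endpointRank k) := fun _ _ hxy =>
  Nat.add_le_add (card_filter_val_lt_and_lt_mono C.l k hxy)
    (card_filter_val_lt_and_lt_mono C.r k hxy)

theorem endpointRank_lt {i : Fin n} {k x y : ℕ} (hik : (i : ℕ) < k) (hx : x = C.l i ∨ x = C.r i)
    (hxy : x < y) : C.endpointRank k x < C.endpointRank k y := by
  rcases hx with rfl | rfl
  · exact Nat.add_lt_add_of_lt_of_le (card_filter_val_lt_and_lt_lt C.l hik hxy)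
      (card_filter_val_lt_and_lt_mono C.r k hxy.le)
  · exact Nat.add_lt_add_of_le_of_lt (card_filter_val_lt_and_lt_mono C.l k hxy.le)
      (card_filter_val_lt_and_lt_lt C.r hik hxy)

theorem endpointRank_le (k x : ℕ) : C.endpointRank k x ≤ 2 * k := by
  have hcard : #{j : Fin n | j.val < k} ≤ k := by
    rw [Fin.card_filter_val_lt]
    exact min_le_right _ _
  have hl : #{j | j.val < k ∧ C.l j < x} ≤ k :=
    (card_le_card (monotone_filter_right _ fun _ _ h => h.1)).trans hcard
  have hr : #{j | j.val < k ∧ C.r j < x} ≤ k :=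
    (card_le_card (monotone_filter_right _ fun _ _ h => h.1)).trans hcard
  unfold endpointRank
  omega

theorem endpointRank_succ (j : Fin n) (x : ℕ) :
    C.endpointRank (j + 1) x =
      C.endpointRank j x + (if C.l j < x then 1 else 0) + if C.r j < x then 1 else 0 := by
  simp only [endpointRank, card_eq_sum_ones, sum_filter_val_lt_succ j.2]
  ring

theorem endpointRank_right (j : Fin n) :
    C.endpointRank j (C.r j) = C.endpointRank j (C.l j) := by
  unfold endpointRank
  congr 2 <;> ext k <;> simp only [mem_filter_univ, and_congr_right_iff] <;> intro hk
  · have hout := C.left_outside hk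
    have hlr := C.left_lt_right j
    omega
  · have hout := C.right_outside hk
    have hlr := C.left_lt_right j
    omega

theorem endpointRank_left_add_card_nested {σ τ : Equiv.Perm (Fin n)}
    (hσ : IsStandardization C.l σ) (hτ : IsStandardization C.r τ) (i : Fin n) :
    C.endpointRank n (C.l i) + #(C.nested i) = permWord σ i + permWord τ i := by
  simp only [endpointRank, Fin.is_lt, true_and, hσ.permWord_eq_card, hτ.permWord_eq_card,
    C.card_filter_right_lt_right]
  ring

theorem endpointRank_right_eq {σ τ : Equiv.Perm (Fin n)}
    (hσ : IsStandardization C.l σ) (hτ : IsStandardization C.r τ) (i : Fin n) :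
    C.endpointRank n (C.r i) = permWord σ i + permWord τ i + 1 + #(C.nested i) := by
  simp only [endpointRank, Fin.is_lt, true_and, hσ.permWord_eq_card, hτ.permWord_eq_card,
    C.card_filter_left_lt_right]
  ring

/-! ### Ribbons of the growth process -/

/-- The column, in the Dyck path formed by the first `k` chords, of the lattice point that separates
their endpoints before step `x` from the others. -/
def col (k x : ℕ) : ℤ := C.endpointRank k x - k

/-- The column at which chord `i` is grown. -/
def growthCol (i : Fin n) : ℤ := C.col i (C.l i)

theorem col_succ_lt_iff {i j : Fin n} (hij : i < j) {x : ℕ} (hx : x = C.l i ∨ x = C.r i) (y : ℤ) :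
    C.col (j + 1) x < y ↔ C.col j x < unspreadCol (C.growthCol j) y := by
  have hl := C.left_outside hij
  have hr := C.right_outside hij
  have hlr := C.left_lt_right j
  have hsucc := C.endpointRank_succ j x
  rcases lt_or_ge x (C.l j) with hlt | hge
  · have hrank := C.endpointRank_lt hij hx hlt
    rw [if_neg (by omega), if_neg (by omega)] at hsucc
    unfold col growthCol col unspreadCol
    split_ifs <;> omega
  · have hrank := C.endpointRank_mono j hge
    rw [if_pos (by omega), if_pos (by omega)] at hsucc
    unfold col growthCol col unspreadCol
    split_ifs <;> omega

/-- The columns, after the first `k` chords have been grown, of the ribbon added by the descent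
`i`. -/
def ribbonCols (k : ℕ) (i : Fin n) : Finset ℤ := Ioc (C.col k (C.r (nextIdx i))) (C.col k (C.l i))

theorem mem_ribbonCols_succ {i j : Fin n} (hij : (i : ℕ) + 1 < j) (y : ℤ) :
    y ∈ C.ribbonCols (j + 1) i ↔ unspreadCol (C.growthCol j) y ∈ C.ribbonCols j i := by
  have hnext : nextIdx i < j := by
    rw [nextIdx_eq (hij.trans j.2)]
    exact hij
  have hi : i < j := Nat.lt_of_succ_lt hij
  rw [ribbonCols, ribbonCols, mem_Ioc, mem_Ioc, ← not_lt, ← not_lt,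
    C.col_succ_lt_iff hnext (Or.inr rfl), C.col_succ_lt_iff hi (Or.inl rfl)]

theorem ribbonCols_of_descent {i : Fin n} (hi : (i : ℕ) + 1 < n)
    (hdes : C.l (nextIdx i) < C.l i) :
    C.ribbonCols (i + 2) i = Ioc (C.growthCol (nextIdx i)) (C.growthCol i) := by
  have hright := C.right_nextIdx_lt_left hi hdes
  have hlr := C.left_lt_right (nextIdx i)
  have hlr_i := C.left_lt_right i
  have hval : (nextIdx i : ℕ) = i + 1 := by rw [nextIdx_eq hi]
  have hval_succ : (nextIdx i : ℕ) + 1 = i + 2 := by rw [hval]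
  have hleft_succ := C.endpointRank_succ i (C.l i)
  have hleft_succ_succ := C.endpointRank_succ (nextIdx i) (C.l i)
  have hright_succ := C.endpointRank_succ (nextIdx i) (C.r (nextIdx i))
  have hright_eq := C.endpointRank_right (nextIdx i)
  rw [if_neg (by omega), if_neg (by omega)] at hleft_succ
  rw [if_pos hdes, if_pos hright, hval_succ, hval] at hleft_succ_succ
  rw [if_pos hlr, if_neg (by omega), hright_eq, hval_succ] at hright_succ
  rw [hval] at hright_succ
  rw [ribbonCols, growthCol, growthCol]
  simp only [col, hval]
  congr 1 <;> omega

theorem growthCol_le_growthCol_nextIdx {i : Fin n} (hi : (i : ℕ) + 1 < n)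
    (hasc : ¬ C.l (nextIdx i) < C.l i) : C.growthCol i ≤ C.growthCol (nextIdx i) := by
  have hlt : C.l i < C.l (nextIdx i) :=
    lt_of_le_of_ne (not_lt.1 hasc) (C.inj.ne (lt_nextIdx hi).ne)
  have hlr := C.left_lt_right i
  have hval : (nextIdx i : ℕ) = i + 1 := by rw [nextIdx_eq hi]
  have hsucc := C.endpointRank_succ i (C.l i)
  have hrank := C.endpointRank_lt (lt_add_one (i : ℕ)) (Or.inl rfl) hlt
  rw [if_neg (by omega), if_neg (by omega)] at hsucc
  unfold growthCol col
  rw [hval]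
  omega

theorem card_Ioc_growthCol_of_descent {i : Fin n} (hi : (i : ℕ) + 1 < n)
    (hdes : C.l (nextIdx i) < C.l i) :
    #(Ioc (C.growthCol (nextIdx i)) (C.growthCol i)) = #(lemSet C.l i) + #(lemSet C.r i) + 1 := by
  have hval : (nextIdx i : ℕ) = i + 1 := by rw [nextIdx_eq hi]
  have hseq := C.seqOf_of_descent hi hdes
  rw [Int.card_Ioc, growthCol, growthCol, col, col, ← seqOf_eq_endpointRank,
    ← seqOf_eq_endpointRank, hseq, hval]
  omega

theorem ribbonCols_subset (i : Fin n) : C.ribbonCols n i ⊆ Icc (-(n : ℤ)) n := by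
  have hle := C.endpointRank_le n (C.l i)
  intro x hx
  simp only [ribbonCols, col, mem_Ioc] at hx
  rw [mem_Icc]
  omega

theorem card_ribbonCols {i : Fin n} (hi : (i : ℕ) + 1 < n) (hdes : C.l (nextIdx i) < C.l i) :
    (#(C.ribbonCols n i) : ℤ) =
      C.endpointRank n (C.l i) - C.endpointRank n (C.r (nextIdx i)) := by
  have hmono := C.endpointRank_mono n (C.right_nextIdx_lt_left hi hdes).le
  rw [ribbonCols, Int.card_Ioc, col, col]
  omega

/-- `T` is the tiling reached after growing the first `k` chords. -/
def IsPrefixDTR (k : ℕ) (T : DyckTiling k) : Prop :=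
  ∃ hk : k ≤ n, IsDTR k (fun i => seqOf C (Fin.castLE hk i)) T

namespace IsPrefixDTR

variable {C}

theorem exists_ribbonGrowRel {i : Fin n} {T' : DyckTiling (i + 1)}
    (h : C.IsPrefixDTR (i + 1) T') :
    ∃ T, C.IsPrefixDTR i T ∧ RibbonGrowRel T (C.growthCol i) T' := by
  obtain ⟨hk, h⟩ := h
  cases h with
  | cons _ _ T _ hT hgrow => exact ⟨T, ⟨i.2.le, hT⟩, hgrow⟩

theorem exists_ribbon {i : Fin n} (hi : (i : ℕ) + 1 < n) {T' : DyckTiling (i + 2)}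
    (h : C.IsPrefixDTR (i + 2) T') :
    ∃ T, C.IsPrefixDTR (i + 1) T ∧
      T'.numTiles = T.numTiles + #(Ioc (C.growthCol (nextIdx i)) (C.growthCol i)) ∧
      ∀ x, T'.upper.ht x - T'.lower.ht x =
        T.upper.ht (unspreadCol (C.growthCol (nextIdx i)) x) -
          T.lower.ht (unspreadCol (C.growthCol (nextIdx i)) x) +
          if x ∈ Ioc (C.growthCol (nextIdx i)) (C.growthCol i) then 2 else 0 := by
  rw [nextIdx_eq hi]
  obtain ⟨T, hT, hgrow⟩ := h.exists_ribbonGrowRel (i := ⟨i + 1, hi⟩)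
  obtain ⟨T₀, -, hgrow₀⟩ := hT.exists_ribbonGrowRel
  have hspecial := hgrow₀.specialCol
  exact ⟨T, hT, hgrow.numTiles hspecial.2 fun _ => hspecial.1,
    hgrow.ht_sub_ht hspecial.2 fun _ => hspecial.1⟩

theorem numTiles {k : ℕ} {T : DyckTiling k} (h : C.IsPrefixDTR k T) :
    T.numTiles = ∑ i ∈ prefixDescents C.l k, (#(lemSet C.l i) + #(lemSet C.r i) + 1) := by
  induction k with
  | zero => rw [T.numTiles_eq_zero zero_le_one, prefixDescents_of_le_one _ zero_le_one,
      sum_empty]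
  | succ k ih =>
    rcases k with _ | k
    · rw [T.numTiles_eq_zero le_rfl, prefixDescents_of_le_one _ le_rfl, sum_empty]
    · have hk : k + 1 < n := h.choose
      obtain ⟨T₀, hT₀, hcard, -⟩ := h.exists_ribbon (i := ⟨k, by omega⟩) hk
      rw [hcard, ih hT₀, sum_prefixDescents_succ C.l ⟨k, by omega⟩]
      congr 1
      split_ifs with hdes
      · exact C.card_Ioc_growthCol_of_descent hk hdes
      · rw [Ioc_eq_empty (C.growthCol_le_growthCol_nextIdx hk hdes).not_gt, card_empty]

theorem ht_sub_ht_one {T : DyckTiling 1} (h : C.IsPrefixDTR 1 T) (x : ℤ) :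
    T.upper.ht x - T.lower.ht x = 0 := by
  have hn : 0 < n := h.choose
  obtain ⟨T₀, -, hgrow⟩ := h.exists_ribbonGrowRel (i := ⟨0, hn⟩)
  have hnotEligible : ∀ b, ¬ EligibleCol T₀.upper.ht T₀.tiles b := fun b hb => by
    have hup := hb.1
    rw [T₀.upper.ht_zero, T₀.upper.ht_zero] at hup
    omega
  rw [hgrow.ht_sub_ht (c := C.growthCol ⟨0, hn⟩) (fun b hb => absurd hb (hnotEligible b))
    (absurd · (lt_irrefl _)), Ioc_self, T₀.upper.ht_zero, T₀.lower.ht_zero]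
  rfl

theorem ht_sub_ht {k : ℕ} {T : DyckTiling k} (h : C.IsPrefixDTR k T) (x : ℤ) :
    T.upper.ht x - T.lower.ht x =
      ∑ i ∈ prefixDescents C.l k, if x ∈ C.ribbonCols k i then 2 else 0 := by
  induction k generalizing x with
  | zero => rw [T.upper.ht_zero, T.lower.ht_zero, prefixDescents_of_le_one _ zero_le_one,
      sum_empty, sub_zero]
  | succ k ih =>
    rcases k with _ | k
    · rw [h.ht_sub_ht_one, prefixDescents_of_le_one _ le_rfl, sum_empty]
    · have hk : k + 1 < n := h.choose
      let i : Fin n := ⟨k, by omega⟩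
      obtain ⟨T₀, hT₀, -, hht⟩ := h.exists_ribbon (i := i) hk
      rw [hht, ih hT₀, sum_prefixDescents_succ C.l i]
      congr 1
      · refine sum_congr rfl fun j hj => if_congr ?_ rfl rfl
        have hj := (mem_filter_univ j).1 hj
        rw [nextIdx_eq hk]
        exact (C.mem_ribbonCols_succ (j := ⟨k + 1, hk⟩) hj.1 x).symm
      · by_cases hdes : C.l (nextIdx i) < C.l i
        · rw [if_pos hdes, ← C.ribbonCols_of_descent hk hdes]
        · rw [if_neg hdes, Ioc_eq_empty (C.growthCol_le_growthCol_nextIdx hk hdes).not_gt]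
          rfl

end IsPrefixDTR

theorem area_eq_sum {T : DyckTiling n} (h : IsDTR n (seqOf C) T) :
    (T.area : ℤ) = ∑ i ∈ descentFinset C.l,
      ((C.endpointRank n (C.l i) : ℤ) - C.endpointRank n (C.r (nextIdx i))) := by
  have hT : C.IsPrefixDTR n T := ⟨le_rfl, h⟩
  suffices htwo : 2 * (T.area : ℤ) = 2 * ∑ i ∈ descentFinset C.l, (#(C.ribbonCols n i) : ℤ) by
    rw [mul_left_cancel₀ two_ne_zero htwo]
    refine sum_congr rfl fun i hi => ?_
    have hi := (mem_filter_univ i).1 hi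
    exact C.card_ribbonCols hi.1 hi.2
  rw [T.two_mul_area, mul_sum, sum_congr rfl fun x _ => hT.ht_sub_ht x, sum_comm]
  refine sum_congr rfl fun i _ => ?_
  rw [sum_ite_mem, inter_eq_right.2 (C.ribbonCols_subset i), sum_const, nsmul_eq_mul, mul_comm]

theorem numTiles_eq_sum {T : DyckTiling n} (h : IsDTR n (seqOf C) T) :
    T.numTiles = ∑ i ∈ descentFinset C.l, (#(lemSet C.l i) + #(lemSet C.r i) + 1) :=
  IsPrefixDTR.numTiles ⟨le_rfl, h⟩

theorem endpointRank_left_sub_endpointRank_right {σ τ : Equiv.Perm (Fin n)}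
    (hσ : IsStandardization C.l σ) (hτ : IsStandardization C.r τ) {i : Fin n}
    (hi : i ∈ descentFinset C.l) :
    (C.endpointRank n (C.l i) : ℤ) - C.endpointRank n (C.r (nextIdx i)) =
      (permWord σ i : ℤ) - permWord σ (nextIdx i) + permWord τ i - permWord τ (nextIdx i) - 1 -
        #(symmDiff (remSet C.l i) (remSet C.r i)) := by
  obtain ⟨hi, hdes⟩ := (mem_filter_univ i).1 hi
  have hleft := C.endpointRank_left_add_card_nested hσ hτ i
  have hright := C.endpointRank_right_eq hσ hτ (nextIdx i)
  rw [C.card_symmDiff_remSet hi hdes]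
  omega

theorem card_lemSet_left_add_card_lemSet_right {σ τ : Equiv.Perm (Fin n)}
    (hσ : IsStandardization C.l σ) (hτ : IsStandardization C.r τ) {i : Fin n}
    (hi : i ∈ descentFinset C.l) :
    ((#(lemSet C.l i) + #(lemSet C.r i) + 1 : ℕ) : ℤ) =
      (permWord σ i : ℤ) - permWord σ (nextIdx i) + permWord τ i - permWord τ (nextIdx i) - 1 -
        (#(remSet C.l i) + #(remSet C.r i)) := by
  obtain ⟨hi, hdes⟩ := (mem_filter_univ i).1 hi
  have hleft := hσ.permWord_eq_of_descent hdes
  have hright := hτ.permWord_eq_of_descent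
    ((C.right_nextIdx_lt_left hi hdes).trans (C.left_lt_right i))
  omega

end ChordLabeling

/-- For `T = DTR(λ, σ)`, with `σ`, `τ` the standardizations of the
left- and right-endpoint words:
`area(T) = desdif(σ,τ) − des(σ) − Σ_{i ∈ DES σ} |REM_i(σ) Δ REM_i(τ)|` and
`tiles(T) = desdif(σ,τ) − des(σ) − Σ_{i ∈ DES σ} (|REM_i(σ)| + |REM_i(τ)|)`. -/
theorem area_tiles_DTR_rem_formulas (n : ℕ) (lam : DyckPath n) (C : ChordLabeling lam)
    (σ τ : Equiv.Perm (Fin n)) (hσ : IsStandardization C.l σ)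
    (hτ : IsStandardization C.r τ)
    (T : DyckTiling n) (hT : IsDTR n (seqOf C) T) :
    (T.area : ℤ) =
      (∑ i ∈ descentFinset (permWord σ),
        ((permWord σ i : ℤ) - (permWord σ (nextIdx i) : ℤ) +
          (permWord τ i : ℤ) - (permWord τ (nextIdx i) : ℤ))) -
        (permDes σ : ℤ) -
        ∑ i ∈ descentFinset (permWord σ),
          ((symmDiff (remSet (permWord σ) i) (remSet (permWord τ) i)).card : ℤ) ∧
    (T.numTiles : ℤ) =
      (∑ i ∈ descentFinset (permWord σ),
        ((permWord σ i : ℤ) - (permWord σ (nextIdx i) : ℤ) +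
          (permWord τ i : ℤ) - (permWord τ (nextIdx i) : ℤ))) -
        (permDes σ : ℤ) -
        ∑ i ∈ descentFinset (permWord σ),
          (((remSet (permWord σ) i).card : ℤ) + ((remSet (permWord τ) i).card : ℤ)) := by
  simp only [permDes, hσ.descentFinset_permWord, hσ.remSet_permWord, hτ.remSet_permWord,
    card_eq_sum_ones (descentFinset _), Nat.cast_sum, Nat.cast_one, ← sum_sub_distrib]
  constructor
  · rw [C.area_eq_sum hT]
    exact sum_congr rfl fun i hi => C.endpointRank_left_sub_endpointRank_right hσ hτ hi
  · rw [C.numTiles_eq_sum hT, Nat.cast_sum]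
    exact sum_congr rfl fun i hi => C.card_lemSet_left_add_card_lemSet_right hσ hτ hi

end
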